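/- Let d ≥ 1, let Q₀ ⊆ ℝ^d be a dyadic cube, let λ₀ ∈ ℝ, and let f ∈ L¹(Q₀) satisfy |{f > λ₀} ∩ Q₀| ≤ 2^{-d-1}|Q₀|. For each λ ∈ ℝ let 𝒬_λ denote the set of maximal dyadic cubes Q ⊆ Q₀ (with respect to inclusion) satisfying f_Q > λ. Then |Q₀| · (f_{Q₀} − λ₀) ≤ 2^{d+1} ∫_{λ₀}^{∞} | {f > λ} ∩ ⋃{ P ∈ 𝒬_λ : |{f > λ} ∩ P| ≤ |P|/2 } | dλ. -/

import Mathlib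

open MeasureTheory Metric Set Filter
open scoped ENNReal Topology

noncomputable section

/-- `ℝ^d` as Euclidean space. -/
abbrev Ed (d : ℕ) := EuclideanSpace ℝ (Fin d)

/-- A dyadic cube `∏_i [2^n m_i, 2^n (m_i + 1))`. -/
def IsDyadicCube {d : ℕ} (Q : Set (Ed d)) : Prop :=
  ∃ (n : ℤ) (m : Fin d → ℤ),
    Q = {x : Ed d | ∀ i, x i ∈ Set.Ico ((2:ℝ)^n * m i) ((2:ℝ)^n * (m i + 1))}

/-- `P` is a maximal dyadic cube `P ⊆ Q₀` (w.r.t. inclusion) with `⨍_P f > λ`. -/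
def IsMaxSubcube {d : ℕ} (Q₀ : Set (Ed d)) (f : Ed d → ℝ) (lam : ℝ)
    (P : Set (Ed d)) : Prop :=
  IsDyadicCube P ∧ P ⊆ Q₀ ∧ lam < ⨍ z in P, f z ∧
    ∀ P' : Set (Ed d), IsDyadicCube P' → P' ⊆ Q₀ → lam < (⨍ z in P', f z) → P ⊆ P' → P' = P


/-- The cell of the dyadic grid of side length `2 ^ n` that contains `x`. -/
def dyadicCell {d : ℕ} (n : ℤ) (x : Ed d) : Set (Ed d) :=
  {y | ∀ i, ⌊y i / (2:ℝ)^n⌋ = ⌊x i / (2:ℝ)^n⌋}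

section DyadicCells

variable {d : ℕ}

lemma mem_dyadicCell_self (n : ℤ) (x : Ed d) : x ∈ dyadicCell n x := fun _ => rfl

lemma dyadicCell_eq_of_mem {n : ℤ} {x y : Ed d} (h : y ∈ dyadicCell n x) :
    dyadicCell n y = dyadicCell n x := by
  ext z
  simp only [dyadicCell, mem_ofPred_eq] at h ⊢
  simp only [h]

lemma dyadicCell_mono {n n' : ℤ} (h : n ≤ n') (x : Ed d) :
    dyadicCell n x ⊆ dyadicCell n' x := by
  obtain ⟨k, rfl⟩ := Int.le.dest h
  have key (t : ℝ) : ⌊t / (2:ℝ)^(n + (k:ℤ))⌋ = ⌊t / (2:ℝ)^n⌋ / ((2 ^ k : ℕ) : ℤ) := by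
    rw [← Int.floor_div_natCast, zpow_add₀ two_ne_zero, zpow_natCast, div_div]
    push_cast
    rfl
  intro y hy i
  rw [key, key, hy i]

lemma floor_div_eq_iff_mem_Ico (n m : ℤ) (t : ℝ) :
    ⌊t / (2:ℝ)^n⌋ = m ↔ t ∈ Set.Ico ((2:ℝ)^n * m) ((2:ℝ)^n * (m + 1)) := by
  have h : (0:ℝ) < 2 ^ n := by positivity
  rw [Int.floor_eq_iff, le_div_iff₀ h, div_lt_iff₀ h, mul_comm (m:ℝ), mul_comm ((m:ℝ) + 1)]
  rfl

lemma isDyadicCube_dyadicCell (n : ℤ) (x : Ed d) : IsDyadicCube (dyadicCell n x) :=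
  ⟨n, fun i => ⌊x i / (2:ℝ)^n⌋, by
    ext y
    simp only [dyadicCell, mem_ofPred_eq, floor_div_eq_iff_mem_Ico]⟩

lemma IsDyadicCube.exists_eq_dyadicCell {Q : Set (Ed d)} (hQ : IsDyadicCube Q) :
    ∃ n, ∀ x ∈ Q, Q = dyadicCell n x := by
  obtain ⟨n, m, rfl⟩ := hQ
  refine ⟨n, fun x hx => ?_⟩
  ext y
  simp only [mem_ofPred_eq, ← floor_div_eq_iff_mem_Ico, dyadicCell] at hx ⊢
  simp only [hx]

lemma IsDyadicCube.nonempty {Q : Set (Ed d)} (hQ : IsDyadicCube Q) : Q.Nonempty := by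
  obtain ⟨n, m, rfl⟩ := hQ
  refine ⟨WithLp.toLp 2 fun i => (2:ℝ)^n * m i, fun i => ?_⟩
  rw [← floor_div_eq_iff_mem_Ico, mul_div_cancel_left₀ _ (by positivity), Int.floor_intCast]

lemma countable_setOf_isDyadicCube : {Q : Set (Ed d) | IsDyadicCube Q}.Countable := by
  refine (countable_range fun p : ℤ × (Fin d → ℤ) => {x : Ed d | ∀ i,
    x i ∈ Set.Ico ((2:ℝ)^p.1 * p.2 i) ((2:ℝ)^p.1 * (p.2 i + 1))}).mono ?_
  rintro Q ⟨n, m, rfl⟩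
  exact ⟨(n, m), rfl⟩

lemma setOf_forall_mem_Ico_eq_preimage (a b : Fin d → ℝ) :
    {x : Ed d | ∀ i, x i ∈ Set.Ico (a i) (b i)} =
      WithLp.ofLp ⁻¹' (Set.univ.pi fun i => Set.Ico (a i) (b i)) := by
  ext x
  simp

lemma IsDyadicCube.measurableSet {Q : Set (Ed d)} (hQ : IsDyadicCube Q) : MeasurableSet Q := by
  obtain ⟨n, m, rfl⟩ := hQ
  rw [setOf_forall_mem_Ico_eq_preimage]
  exact (PiLp.volume_preserving_ofLp (Fin d)).measurable
    (MeasurableSet.univ_pi fun i => measurableSet_Ico)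

lemma volume_dyadicCell (n : ℤ) (x : Ed d) :
    volume (dyadicCell n x) = ENNReal.ofReal ((2:ℝ)^n) ^ d := by
  have h : dyadicCell n x = {y : Ed d | ∀ i, y i ∈ Set.Ico ((2:ℝ)^n * ⌊x i / (2:ℝ)^n⌋)
      ((2:ℝ)^n * (⌊x i / (2:ℝ)^n⌋ + 1))} := by
    ext y
    simp only [dyadicCell, mem_ofPred_eq, floor_div_eq_iff_mem_Ico]
  rw [h, setOf_forall_mem_Ico_eq_preimage,
    (PiLp.volume_preserving_ofLp (Fin d)).measure_preimage
      (MeasurableSet.univ_pi fun i => measurableSet_Ico).nullMeasurableSet, Real.volume_pi_Ico]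
  simp [mul_add]

lemma volume_dyadicCell_add_one (n : ℤ) (x : Ed d) :
    volume (dyadicCell (n + 1) x) = 2 ^ d * volume (dyadicCell n x) := by
  rw [volume_dyadicCell, volume_dyadicCell, ← mul_pow, zpow_add_one₀ two_ne_zero, mul_comm,
    ENNReal.ofReal_mul zero_le_two, ENNReal.ofReal_ofNat]

lemma IsDyadicCube.volume_ne_top {Q : Set (Ed d)} (hQ : IsDyadicCube Q) : volume Q ≠ ∞ := by
  obtain ⟨x, hx⟩ := hQ.nonempty
  obtain ⟨n, hn⟩ := hQ.exists_eq_dyadicCell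
  rw [hn x hx, volume_dyadicCell]
  exact ENNReal.pow_ne_top ENNReal.ofReal_ne_top

lemma IsDyadicCube.volume_pos {Q : Set (Ed d)} (hQ : IsDyadicCube Q) : 0 < volume Q := by
  obtain ⟨x, hx⟩ := hQ.nonempty
  obtain ⟨n, hn⟩ := hQ.exists_eq_dyadicCell
  rw [hn x hx, volume_dyadicCell]
  have : (0:ℝ) < 2 ^ n := by positivity
  exact pos_iff_ne_zero.2 (pow_ne_zero _ (ENNReal.ofReal_pos.2 this).ne')

lemma le_of_dyadicCell_subset (hd : 1 ≤ d) {n n' : ℤ} {x y : Ed d}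
    (h : dyadicCell n x ⊆ dyadicCell n' y) : n ≤ n' := by
  have hv := measure_mono (μ := volume) h
  rw [volume_dyadicCell, volume_dyadicCell] at hv
  have h0 : (0:ℝ) < 2 ^ n' := by positivity
  rw [ENNReal.pow_le_pow_left_iff (by omega), ENNReal.ofReal_le_ofReal_iff h0.le] at hv
  exact (zpow_le_zpow_iff_right₀ one_lt_two).1 hv

/-- Dyadic cubes that meet are nested. -/
lemma IsDyadicCube.subset_or_subset {P Q : Set (Ed d)} (hP : IsDyadicCube P)
    (hQ : IsDyadicCube Q) {x : Ed d} (hxP : x ∈ P) (hxQ : x ∈ Q) : P ⊆ Q ∨ Q ⊆ P := by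
  obtain ⟨n, hn⟩ := hP.exists_eq_dyadicCell
  obtain ⟨m, hm⟩ := hQ.exists_eq_dyadicCell
  rw [hn x hxP, hm x hxQ]
  exact (le_total n m).imp (fun h => dyadicCell_mono h x) (fun h => dyadicCell_mono h x)

/-- Every neighbourhood of a point contains the small dyadic cells around it. -/
lemma exists_dyadicCell_subset_of_isOpen {O : Set (Ed d)} (hO : IsOpen O) {x : Ed d}
    (hx : x ∈ O) (n₀ : ℤ) : ∃ n ≤ n₀, dyadicCell n x ⊆ O := by
  have hO' : IsOpen (WithLp.toLp 2 ⁻¹' O : Set (Fin d → ℝ)) :=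
    hO.preimage (PiLp.continuous_toLp 2 _)
  obtain ⟨ε, hε, hball⟩ := Metric.isOpen_iff.1 hO' (WithLp.ofLp x) hx
  obtain ⟨k, hk⟩ := exists_pow_lt_of_lt_one hε (by norm_num : (1/2:ℝ) < 1)
  refine ⟨min n₀ (-k), min_le_left _ _, ?_⟩
  have hpos : (0:ℝ) < 2 ^ (min n₀ (-(k:ℤ))) := by positivity
  have hlt : (2:ℝ) ^ (min n₀ (-(k:ℤ))) < ε := by
    refine lt_of_le_of_lt (zpow_le_zpow_right₀ one_le_two (min_le_right _ _)) ?_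
    simpa using hk
  intro y hy
  refine hball (a := WithLp.ofLp y) ?_
  rw [Metric.mem_ball, dist_pi_lt_iff hε]
  intro i
  refine lt_of_lt_of_le ?_ hlt.le
  have h1 := Int.abs_sub_lt_one_of_floor_eq_floor (hy i)
  rwa [← sub_div, abs_div, abs_of_pos hpos, div_lt_one hpos] at h1

end DyadicCells

/-- `P` is maximal among the dyadic subcubes of `Q₀` that satisfy `p`. -/
def IsMaxDyadic {d : ℕ} (Q₀ : Set (Ed d)) (p : Set (Ed d) → Prop) (P : Set (Ed d)) : Prop :=
  IsDyadicCube P ∧ P ⊆ Q₀ ∧ p P ∧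
    ∀ P' : Set (Ed d), IsDyadicCube P' → P' ⊆ Q₀ → p P' → P ⊆ P' → P' = P

section MaximalCubes

variable {d : ℕ} {Q₀ : Set (Ed d)} {p : Set (Ed d) → Prop}

lemma exists_isMaxDyadic (hd : 1 ≤ d) (hQ₀ : IsDyadicCube Q₀) {Q : Set (Ed d)}
    (hQ : IsDyadicCube Q) (hQQ₀ : Q ⊆ Q₀) (hp : p Q) : ∃ P, Q ⊆ P ∧ IsMaxDyadic Q₀ p P := by
  obtain ⟨x, hx⟩ := hQ.nonempty
  obtain ⟨n₀, hn₀⟩ := hQ₀.exists_eq_dyadicCell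
  obtain ⟨k, hk⟩ := hQ.exists_eq_dyadicCell
  have h0 := hn₀ x (hQQ₀ hx)
  have hle : k ≤ n₀ := le_of_dyadicCell_subset hd (hk x hx ▸ h0 ▸ hQQ₀)
  obtain ⟨j, ⟨hjn, hjk, hj⟩, hmax⟩ := Int.exists_greatest_of_bdd
    (P := fun j => j ≤ n₀ ∧ k ≤ j ∧ p (dyadicCell j x)) ⟨n₀, fun j hj => hj.1⟩
    ⟨k, hle, le_rfl, hk x hx ▸ hp⟩
  refine ⟨dyadicCell j x, ?_, isDyadicCube_dyadicCell j x, ?_, hj, ?_⟩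
  · rw [hk x hx]
    exact dyadicCell_mono hjk x
  · rw [h0]
    exact dyadicCell_mono hjn x
  · intro P' hP' hP'Q hpP' hsub
    obtain ⟨l, hl⟩ := hP'.exists_eq_dyadicCell
    have hxl := hl x (hsub (mem_dyadicCell_self j x))
    have hln : l ≤ n₀ := le_of_dyadicCell_subset hd (hxl ▸ h0 ▸ hP'Q)
    have hjl : j ≤ l := le_of_dyadicCell_subset hd (hxl ▸ hsub)
    have : l = j := le_antisymm (hmax l ⟨hln, hjk.trans hjl, hxl ▸ hpP'⟩) hjl
    rw [hxl, this]

lemma IsMaxDyadic.eq_of_mem {P P' : Set (Ed d)} (hP : IsMaxDyadic Q₀ p P)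
    (hP' : IsMaxDyadic Q₀ p P') {x : Ed d} (hx : x ∈ P) (hx' : x ∈ P') : P = P' := by
  rcases hP.1.subset_or_subset hP'.1 hx hx' with h | h
  · exact (hP.2.2.2 P' hP'.1 hP'.2.1 hP'.2.2.1 h).symm
  · exact hP'.2.2.2 P hP.1 hP.2.1 hP.2.2.1 h

lemma countable_of_forall_isMaxDyadic {C : Set (Set (Ed d))} (hC : ∀ P ∈ C, IsMaxDyadic Q₀ p P) :
    C.Countable :=
  countable_setOf_isDyadicCube.mono fun P hP => (hC P hP).1

lemma pairwise_disjoint_of_forall_isMaxDyadic {C : Set (Set (Ed d))}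
    (hC : ∀ P ∈ C, IsMaxDyadic Q₀ p P) : C.Pairwise Disjoint := by
  intro P hP P' hP' hne
  rw [Set.disjoint_left]
  exact fun x hx hx' => hne ((hC P hP).eq_of_mem (hC P' hP') hx hx')

lemma measurableSet_sUnion_of_forall_isMaxDyadic {C : Set (Set (Ed d))}
    (hC : ∀ P ∈ C, IsMaxDyadic Q₀ p P) : MeasurableSet (⋃₀ C) :=
  MeasurableSet.sUnion (countable_of_forall_isMaxDyadic hC) fun P hP => (hC P hP).1.measurableSet

lemma sUnion_subset_of_forall_isMaxDyadic {C : Set (Set (Ed d))}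
    (hC : ∀ P ∈ C, IsMaxDyadic Q₀ p P) : ⋃₀ C ⊆ Q₀ :=
  sUnion_subset fun P hP => (hC P hP).2.1

lemma measure_inter_sUnion_of_forall_isMaxDyadic {C : Set (Set (Ed d))}
    (hC : ∀ P ∈ C, IsMaxDyadic Q₀ p P) {E : Set (Ed d)} (hE : MeasurableSet E) :
    volume (E ∩ ⋃₀ C) = ∑' P : C, volume (E ∩ (P : Set (Ed d))) := by
  have : Countable C := countable_of_forall_isMaxDyadic hC
  rw [sUnion_eq_iUnion, inter_iUnion, measure_iUnion]
  · intro P P' hne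
    exact ((pairwise_disjoint_of_forall_isMaxDyadic hC) P.2 P'.2
      (Subtype.coe_injective.ne hne)).mono inter_subset_right inter_subset_right
  · exact fun P => hE.inter (hC P P.2).1.measurableSet

/-- A measurable subset of `Q₀` whose density in every dyadic subcube is at most `c < 1` is null. -/
lemma measure_eq_zero_of_forall_dyadic_le (hd : 1 ≤ d) (hQ₀ : IsDyadicCube Q₀) {E : Set (Ed d)}
    (hE : MeasurableSet E) (hEQ : E ⊆ Q₀) {c : ℝ≥0∞} (hc : c < 1)
    (h : ∀ Q, IsDyadicCube Q → Q ⊆ Q₀ → volume (E ∩ Q) ≤ c * volume Q) : volume E = 0 := by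
  have hfin : volume E ≠ ∞ := measure_ne_top_of_subset hEQ hQ₀.volume_ne_top
  have hle : volume E ≤ c * volume E := by
    have hO (O : Set (Ed d)) (hEO : E ⊆ O) (hO : IsOpen O) : volume E ≤ c * volume O := by
      set C : Set (Set (Ed d)) := {P | IsMaxDyadic Q₀ (· ⊆ O) P}
      have hC : ∀ P ∈ C, IsMaxDyadic Q₀ (· ⊆ O) P := fun P hP => hP
      have hEC : E ⊆ ⋃₀ C := by
        intro x hx
        obtain ⟨n₀, hn₀⟩ := hQ₀.exists_eq_dyadicCell
        obtain ⟨n, hn, hnO⟩ := exists_dyadicCell_subset_of_isOpen hO (hEO hx) n₀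
        obtain ⟨P, hP, hPm⟩ := exists_isMaxDyadic (p := (· ⊆ O)) hd hQ₀
          (isDyadicCube_dyadicCell n x)
          (by rw [hn₀ x (hEQ hx)]; exact dyadicCell_mono hn x) hnO
        exact ⟨P, hPm, hP (mem_dyadicCell_self n x)⟩
      calc volume E = ∑' P : C, volume (E ∩ (P : Set (Ed d))) := by
            rw [← measure_inter_sUnion_of_forall_isMaxDyadic hC hE, inter_eq_left.2 hEC]
        _ ≤ ∑' P : C, c * volume (P : Set (Ed d)) :=
            ENNReal.tsum_le_tsum fun P => h P P.2.1 P.2.2.1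
        _ = c * volume (⋃₀ C) := by
            rw [ENNReal.tsum_mul_left, measure_sUnion (countable_of_forall_isMaxDyadic hC)
              (pairwise_disjoint_of_forall_isMaxDyadic hC) fun P hP => (hC P hP).1.measurableSet]
        _ ≤ c * volume O := by
            gcongr
            exact sUnion_subset fun P hP => (hC P hP).2.2.1
    have hc' : c ≠ ∞ := hc.ne_top
    refine ENNReal.le_of_forall_pos_le_add fun ε hε _ => ?_
    obtain ⟨O, hEO, hOo, hOv⟩ := E.exists_isOpen_le_add volume (ENNReal.coe_pos.2 hε).ne'
    calc volume E ≤ c * volume O := hO O hEO hOo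
      _ ≤ c * (volume E + ε) := by gcongr
      _ ≤ c * volume E + ε := by
          rw [mul_add]
          gcongr
          exact mul_le_of_le_one_left zero_le hc.le
  by_contra hne
  exact absurd hle (not_le.2 (by simpa using ENNReal.mul_lt_mul_left hne hfin hc))

/-- If every cube of a family of maximal cubes has nonpositive integral, so has their union. -/
lemma setIntegral_sUnion_nonpos_of_forall_isMaxDyadic {C : Set (Set (Ed d))}
    (hC : ∀ P ∈ C, IsMaxDyadic Q₀ p P) {h : Ed d → ℝ} (hh : IntegrableOn h Q₀ volume)
    (hle : ∀ P ∈ C, ∫ x in P, h x ≤ 0) : ∫ x in ⋃₀ C, h x ≤ 0 := by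
  have : Countable C := countable_of_forall_isMaxDyadic hC
  rw [sUnion_eq_iUnion, integral_iUnion (ι := C) (fun P => (hC P P.2).1.measurableSet)]
  · exact tsum_nonpos fun P => hle P P.2
  · intro P P' hne
    exact pairwise_disjoint_of_forall_isMaxDyadic hC P.2 P'.2 (Subtype.coe_injective.ne hne)
  · rw [← sUnion_eq_iUnion]
    exact hh.mono_set (sUnion_subset_of_forall_isMaxDyadic hC)

end MaximalCubes

/-- An averaging argument: if `F` decays at infinity and decreases over each step of length `δ` by
at most `δ * v`, then the value of `F` at the left end point is at most the integral of `v`. -/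
lemma le_lintegral_Ioi_of_forall_le_add {F v : ℝ → ℝ≥0∞} (hv : Measurable v) {a : ℝ}
    {c C : ℝ≥0∞} {K : NNReal}
    (hstep : ∀ t > a, ∀ δ > 0, F t ≤ ENNReal.ofReal δ * v t + F (t + δ))
    (hC : C ≠ ∞) (hFC : ∀ t > a, F t ≤ C) (hlim : Tendsto F atTop (𝓝 0))
    (hlow : ∀ t > a, c ≤ F t + ENNReal.ofReal (t - a) * K) :
    c ≤ ∫⁻ t in Ioi a, v t := by
  have key (ε : ℝ≥0∞) (hε : 0 < ε) (δ : ℝ) (hδ : 0 < δ) :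
      c ≤ (∫⁻ t in Ioi a, v t) + ε + ENNReal.ofReal δ * K := by
    obtain ⟨b, hb⟩ := ENNReal.tendsto_atTop_zero.1 hlim ε hε
    set e := max b (a + δ)
    have hae : a + δ ≤ e := le_max_right _ _
    have split1 : ∫⁻ t in Ioc a e, F t =
        (∫⁻ t in Ioc a (a + δ), F t) + ∫⁻ t in Ioc (a + δ) e, F t := by
      rw [← lintegral_union measurableSet_Ioc (Ioc_disjoint_Ioc_of_le le_rfl),
        Ioc_union_Ioc_eq_Ioc (by linarith) hae]
    have split2 : ∫⁻ t in Ioc (a + δ) (e + δ), F t =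
        (∫⁻ t in Ioc (a + δ) e, F t) + ∫⁻ t in Ioc e (e + δ), F t := by
      rw [← lintegral_union measurableSet_Ioc (Ioc_disjoint_Ioc_of_le le_rfl),
        Ioc_union_Ioc_eq_Ioc hae (by linarith)]
    have hshift : ∫⁻ t in Ioc a e, F (t + δ) = ∫⁻ t in Ioc (a + δ) (e + δ), F t := by
      simpa using (measurePreserving_add_right volume δ).setLIntegral_comp_preimage_emb
        (measurableEmbedding_addRight δ) F (Ioc (a + δ) (e + δ))
    have hle : ∫⁻ t in Ioc a e, F t ≤
        ENNReal.ofReal δ * (∫⁻ t in Ioi a, v t) + ∫⁻ t in Ioc (a + δ) (e + δ), F t := by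
      calc ∫⁻ t in Ioc a e, F t ≤ ∫⁻ t in Ioc a e, (ENNReal.ofReal δ * v t + F (t + δ)) :=
            setLIntegral_mono' measurableSet_Ioc fun t ht => hstep t ht.1 δ hδ
        _ = ENNReal.ofReal δ * (∫⁻ t in Ioc a e, v t) + ∫⁻ t in Ioc (a + δ) (e + δ), F t := by
            rw [lintegral_add_left (hv.const_mul _), lintegral_const_mul _ hv, hshift]
        _ ≤ _ := by
            gcongr
            exact Ioc_subset_Ioi_self
    have htail : ∫⁻ t in Ioc e (e + δ), F t ≤ ENNReal.ofReal δ * ε := by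
      calc ∫⁻ t in Ioc e (e + δ), F t ≤ ∫⁻ _ in Ioc e (e + δ), ε :=
            setLIntegral_mono' measurableSet_Ioc fun t ht => hb t ((le_max_left _ _).trans ht.1.le)
        _ = ENNReal.ofReal δ * ε := by
            rw [setLIntegral_const, Real.volume_Ioc, add_sub_cancel_left, mul_comm]
    have hmid : ∫⁻ t in Ioc (a + δ) e, F t ≠ ∞ := by
      refine ne_top_of_le_ne_top (b := C * volume (Ioc (a + δ) e)) ?_ ?_
      · exact ENNReal.mul_ne_top hC (by simp)
      · rw [← setLIntegral_const]
        exact setLIntegral_mono' measurableSet_Ioc fun t ht => hFC t (by linarith [ht.1])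
    have hhead : ENNReal.ofReal δ * c ≤
        (∫⁻ t in Ioc a (a + δ), F t) + ENNReal.ofReal δ * (ENNReal.ofReal δ * K) := by
      have hvol : volume (Ioc a (a + δ)) = ENNReal.ofReal δ := by simp
      calc ENNReal.ofReal δ * c = ∫⁻ _ in Ioc a (a + δ), c := by
            rw [setLIntegral_const, hvol, mul_comm]
        _ ≤ ∫⁻ t in Ioc a (a + δ), (F t + ENNReal.ofReal δ * K) := by
            refine setLIntegral_mono' measurableSet_Ioc fun t ht => (hlow t ht.1).trans ?_
            gcongr
            linarith [ht.2]
        _ = _ := by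
            rw [lintegral_add_right _ measurable_const, setLIntegral_const, hvol]
            ring
    rw [split1, split2, add_comm (∫⁻ t in Ioc (a + δ) e, F t), ← add_assoc,
      ENNReal.add_le_add_iff_right hmid] at hle
    have hδ0 : ENNReal.ofReal δ ≠ 0 := (ENNReal.ofReal_pos.2 hδ).ne'
    rw [← ENNReal.mul_le_mul_iff_right hδ0 ENNReal.ofReal_ne_top, mul_add, mul_add]
    calc _ ≤ _ := hhead
      _ ≤ _ := by gcongr; exact hle.trans (by gcongr)
  refine ENNReal.le_of_forall_pos_le_add fun ε hε _ => ?_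
  have hK : (0:ℝ) < K + 1 := by positivity
  refine (key (ε / 2 : NNReal) (by simpa using hε.ne') (ε / 2 / (K + 1)) (by positivity)).trans ?_
  rw [add_assoc]
  gcongr
  calc ((ε / 2 : NNReal) : ℝ≥0∞) + ENNReal.ofReal (ε / 2 / (K + 1)) * K
      ≤ ((ε / 2 : NNReal) : ℝ≥0∞) + ENNReal.ofReal (ε / 2) := by
        gcongr
        rw [← ENNReal.ofReal_coe_nnreal, ← ENNReal.ofReal_mul (by positivity)]
        refine ENNReal.ofReal_le_ofReal ?_
        rw [div_mul_eq_mul_div, div_le_iff₀ hK]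
        gcongr
        linarith
    _ = ε := by
        have : ENNReal.ofReal ((ε:ℝ) / 2) = ((ε / 2 : NNReal) : ℝ≥0∞) := by
          rw [← ENNReal.ofReal_coe_nnreal]
          simp
        rw [this, ← ENNReal.coe_add, add_halves]

/-- The superlevel set `{f > lam}` has density more than `2 ^ (-d - 1)` in `Q`. -/
def IsDenseAt {d : ℕ} (f : Ed d → ℝ) (lam : ℝ) (Q : Set (Ed d)) : Prop :=
  volume Q / 2 ^ (d + 1) < volume ({x | lam < f x} ∩ Q)

/-- The maximal dyadic subcubes of `Q₀` in which `{f > lam}` is dense. -/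
def denseCubes {d : ℕ} (Q₀ : Set (Ed d)) (f : Ed d → ℝ) (lam : ℝ) : Set (Set (Ed d)) :=
  {Q | IsMaxDyadic Q₀ (IsDenseAt f lam) Q}

/-- The union of those maximal dense cubes on which `f` has average more than `lam`. -/
def heavyUnion {d : ℕ} (Q₀ : Set (Ed d)) (f : Ed d → ℝ) (lam : ℝ) : Set (Ed d) :=
  ⋃₀ {Q | Q ∈ denseCubes Q₀ f lam ∧ lam < ⨍ z in Q, f z}

section DenseCubes

variable {d : ℕ} {Q₀ : Set (Ed d)} {f : Ed d → ℝ} {lam : ℝ}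

lemma IsDenseAt.anti {lam' : ℝ} (h : lam ≤ lam') {Q : Set (Ed d)} (hQ : IsDenseAt f lam' Q) :
    IsDenseAt f lam Q :=
  hQ.trans_le (measure_mono (inter_subset_inter_left _ fun _ hx => lt_of_le_of_lt h hx))

lemma measurableSet_heavyUnion : MeasurableSet (heavyUnion Q₀ f lam) :=
  measurableSet_sUnion_of_forall_isMaxDyadic (p := IsDenseAt f lam) fun _ hP => hP.1

lemma heavyUnion_subset : heavyUnion Q₀ f lam ⊆ Q₀ :=
  sUnion_subset_of_forall_isMaxDyadic (p := IsDenseAt f lam) fun _ hP => hP.1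

lemma measurable_volume_heavyUnion :
    Measurable fun t => volume (heavyUnion Q₀ f t) := by
  set I : Set (Ed d) → Set ℝ := fun Q => {t | Q ∈ denseCubes Q₀ f t ∧ t < ⨍ z in Q, f z}
  have hI (Q : Set (Ed d)) : MeasurableSet (I Q) := by
    refine OrdConnected.measurableSet (ordConnected_def.2 ?_)
    rintro s ⟨hs, -⟩ t ⟨ht, ht'⟩ r ⟨hsr, hrt⟩
    exact ⟨⟨hs.1, hs.2.1, ht.2.2.1.anti hrt, fun P' hP' hP'Q hd =>
      hs.2.2.2 P' hP' hP'Q (hd.anti hsr)⟩, lt_of_le_of_lt hrt ht'⟩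
  have hW : MeasurableSet (⋃ Q ∈ {Q : Set (Ed d) | IsDyadicCube Q}, I Q ×ˢ Q) :=
    MeasurableSet.biUnion countable_setOf_isDyadicCube fun Q hQ =>
      (hI Q).prod (IsDyadicCube.measurableSet hQ)
  convert measurable_measure_prodMk_left (ν := (volume : Measure (Ed d))) hW using 3 with t
  ext x
  simp only [heavyUnion, mem_sUnion, mem_ofPred_eq, mem_preimage, mem_iUnion, mem_prod, exists_prop,
    I]
  exact ⟨fun ⟨Q, hQ, hx⟩ => ⟨Q, hQ.1.1, hQ, hx⟩, fun ⟨Q, _, hQ, hx⟩ => ⟨Q, hQ, hx⟩⟩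

/-- Almost every point of the superlevel set lies in a maximal dense cube. -/
lemma measure_superlevel_sdiff_sUnion_denseCubes (hd : 1 ≤ d) (hQ₀ : IsDyadicCube Q₀)
    (hf : Measurable f) : volume (({x | lam < f x} ∩ Q₀) \ ⋃₀ denseCubes Q₀ f lam) = 0 := by
  have hU : MeasurableSet (⋃₀ denseCubes Q₀ f lam) :=
    measurableSet_sUnion_of_forall_isMaxDyadic (p := IsDenseAt f lam) fun _ hP => hP
  refine measure_eq_zero_of_forall_dyadic_le hd hQ₀ (c := (2 ^ (d + 1))⁻¹)
    (((measurableSet_lt measurable_const hf).inter hQ₀.measurableSet).diff hU)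
    (sdiff_subset.trans inter_subset_right) ?_ fun Q hQ hQQ₀ => ?_
  · exact ENNReal.inv_lt_one.2 (one_lt_pow₀ ENNReal.one_lt_two (by omega))
  · by_cases hp : IsDenseAt f lam Q
    · obtain ⟨P, hQP, hP⟩ := exists_isMaxDyadic hd hQ₀ hQ hQQ₀ hp
      have : (({x | lam < f x} ∩ Q₀) \ ⋃₀ denseCubes Q₀ f lam) ∩ Q = ∅ :=
        Set.disjoint_iff_inter_eq_empty.1 (Set.disjoint_left.2 fun x hx hxQ =>
          hx.2 ⟨P, hP, hQP hxQ⟩)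
      rw [this, measure_empty]
      exact zero_le
    · rw [mul_comm, ← div_eq_mul_inv]
      exact (measure_mono (inter_subset_inter_left _ fun x hx => hx.1.1)).trans (not_lt.1 hp)

lemma setIntegral_sub_const (hf : IntegrableOn f Q₀ volume) {Q : Set (Ed d)}
    (hQ : IsDyadicCube Q) (hQQ₀ : Q ⊆ Q₀) (t : ℝ) :
    ∫ x in Q, (f x - t) = volume.real Q * ((⨍ z in Q, f z) - t) := by
  have hne : volume.real Q ≠ 0 :=
    (ENNReal.toReal_pos hQ.volume_pos.ne' hQ.volume_ne_top).ne'
  rw [integral_sub (hf.mono_set hQQ₀) (integrableOn_const hQ.volume_ne_top), setAverage_eq,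
    setIntegral_const, smul_eq_mul, smul_eq_mul, mul_sub, mul_inv_cancel_left₀ hne]

/-- Among the sets that are compatible with the maximal dense cubes, the integral of `f - lam` is
largest over the union of the heavy cubes. -/
lemma setIntegral_le_setIntegral_heavyUnion (hd : 1 ≤ d) (hQ₀ : IsDyadicCube Q₀)
    (hf : Measurable f) (hfi : IntegrableOn f Q₀ volume) {W : Set (Ed d)} (hW : MeasurableSet W)
    (hWQ₀ : W ⊆ Q₀) (hWQ : ∀ Q ∈ denseCubes Q₀ f lam, Q ⊆ W ∨ Disjoint Q W) :
    ∫ x in W, (f x - lam) ≤ ∫ x in heavyUnion Q₀ f lam, (f x - lam) := by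
  have hh : IntegrableOn (fun x => f x - lam) Q₀ volume :=
    hfi.sub (integrableOn_const hQ₀.volume_ne_top)
  set V := heavyUnion Q₀ f lam
  have hV : MeasurableSet V := measurableSet_heavyUnion
  have hVQ₀ : V ⊆ Q₀ := heavyUnion_subset
  set U := ⋃₀ denseCubes Q₀ f lam
  have hU : MeasurableSet U :=
    measurableSet_sUnion_of_forall_isMaxDyadic (p := IsDenseAt f lam) fun _ hP => hP
  have havg (Q) (hQ : Q ∈ denseCubes Q₀ f lam) :
      ∫ x in Q, (f x - lam) = volume.real Q * ((⨍ z in Q, f z) - lam) :=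
    setIntegral_sub_const hfi hQ.1 hQ.2.1 lam
  have hlight : ∫ x in (W \ V) ∩ U, (f x - lam) ≤ 0 := by
    have heq : (W \ V) ∩ U =
        ⋃₀ {Q | Q ∈ denseCubes Q₀ f lam ∧ Q ⊆ W ∧ (⨍ z in Q, f z) ≤ lam} := by
      ext x
      constructor
      · rintro ⟨⟨hxW, hxV⟩, Q, hQ, hxQ⟩
        exact ⟨Q, ⟨hQ, (hWQ Q hQ).resolve_right fun h => Set.disjoint_left.1 h hxQ hxW,
          not_lt.1 fun h => hxV ⟨Q, ⟨hQ, h⟩, hxQ⟩⟩, hxQ⟩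
      · rintro ⟨Q, ⟨hQ, hQW, hle⟩, hxQ⟩
        refine ⟨⟨hQW hxQ, ?_⟩, Q, hQ, hxQ⟩
        rintro ⟨Q', ⟨hQ', hlt⟩, hxQ'⟩
        exact hle.not_gt (hQ.eq_of_mem hQ' hxQ hxQ' ▸ hlt)
    rw [heq]
    refine setIntegral_sUnion_nonpos_of_forall_isMaxDyadic (p := IsDenseAt f lam)
      (fun P hP => hP.1) hh fun P hP => ?_
    rw [havg P hP.1]
    exact mul_nonpos_of_nonneg_of_nonpos measureReal_nonneg (sub_nonpos.2 hP.2.2)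
  have hrest : ∫ x in (W \ V) \ U, (f x - lam) ≤ 0 := by
    refine setIntegral_nonpos_ae ((hW.diff hV).diff hU) ?_
    filter_upwards [measure_eq_zero_iff_ae_notMem.1
      (measure_superlevel_sdiff_sUnion_denseCubes (lam := lam) hd hQ₀ hf)] with x hx hxW
    by_contra! hlt
    exact hx ⟨⟨sub_pos.1 hlt, hWQ₀ hxW.1.1⟩, hxW.2⟩
  have hheavy : 0 ≤ ∫ x in V \ W, (f x - lam) := by
    have heq : V \ W =
        ⋃₀ {Q | Q ∈ denseCubes Q₀ f lam ∧ Disjoint Q W ∧ lam < ⨍ z in Q, f z} := by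
      ext x
      constructor
      · rintro ⟨⟨Q, ⟨hQ, hlt⟩, hxQ⟩, hxW⟩
        exact ⟨Q, ⟨hQ, (hWQ Q hQ).resolve_left fun h => hxW (h hxQ), hlt⟩, hxQ⟩
      · rintro ⟨Q, ⟨hQ, hQW, hlt⟩, hxQ⟩
        exact ⟨⟨Q, ⟨hQ, hlt⟩, hxQ⟩, Set.disjoint_left.1 hQW hxQ⟩
    rw [heq, ← neg_nonpos, ← integral_neg]
    refine setIntegral_sUnion_nonpos_of_forall_isMaxDyadic (p := IsDenseAt f lam)
      (fun P hP => hP.1) hh.neg fun P hP => ?_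
    rw [integral_neg, havg P hP.1, neg_nonpos]
    exact mul_nonneg measureReal_nonneg (sub_nonneg.2 hP.2.2.le)
  have h1 := integral_inter_add_sdiff hV (hh.mono_set hWQ₀)
  have h2 := integral_inter_add_sdiff hU (hh.mono_set (sdiff_subset.trans hWQ₀) (s := W \ V))
  have h3 := integral_inter_add_sdiff hW (hh.mono_set hVQ₀)
  rw [inter_comm V W] at h3
  linarith

/-- Cubes that contain a maximal dense cube are sparse, once `Q₀` is not dense. -/
lemma volume_superlevel_inter_le_half (hd : 1 ≤ d) (hQ₀ : IsDyadicCube Q₀)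
    (hsmall : ¬ IsDenseAt f lam Q₀) {Q R : Set (Ed d)} (hQ : Q ∈ denseCubes Q₀ f lam)
    (hR : IsDyadicCube R) (hRQ₀ : R ⊆ Q₀) (hQR : Q ⊆ R) :
    volume ({x | lam < f x} ∩ R) ≤ volume R / 2 := by
  by_cases hp : IsDenseAt f lam R
  · obtain rfl := hQ.2.2.2 R hR hRQ₀ hp hQR
    obtain ⟨x, hx⟩ := hR.nonempty
    obtain ⟨n, hn⟩ := hR.exists_eq_dyadicCell
    obtain ⟨n₀, hn₀⟩ := hQ₀.exists_eq_dyadicCell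
    have hRx := hn x hx
    have h0 := hn₀ x (hRQ₀ hx)
    have hle : n ≤ n₀ := le_of_dyadicCell_subset hd (hRx ▸ h0 ▸ hRQ₀)
    have hlt : n < n₀ := by
      refine lt_of_le_of_ne hle ?_
      rintro rfl
      exact hsmall (h0.trans hRx.symm ▸ hp)
    have hsub : R ⊆ dyadicCell (n + 1) x := hRx ▸ dyadicCell_mono (by omega) x
    have hpar : ¬ IsDenseAt f lam (dyadicCell (n + 1) x) := by
      intro h
      have heq := hQ.2.2.2 _ (isDyadicCube_dyadicCell (n + 1) x)
        (h0 ▸ dyadicCell_mono (by omega) x) h hsub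
      have := le_of_dyadicCell_subset hd (heq.trans hRx).subset
      omega
    calc volume ({x | lam < f x} ∩ R) ≤ volume ({x | lam < f x} ∩ dyadicCell (n + 1) x) := by
          gcongr
      _ ≤ volume (dyadicCell (n + 1) x) / 2 ^ (d + 1) := not_lt.1 hpar
      _ = volume R / 2 := by
          rw [volume_dyadicCell_add_one, ← hRx, pow_succ]
          exact ENNReal.mul_div_mul_left _ _ (by simp) (by simp)
  · refine (not_lt.1 hp).trans (ENNReal.div_le_div_left ?_ _)
    exact le_self_pow₀ one_le_two (by omega)

/-- The heavy cubes are covered by sparse maximal cubes, and the superlevel set fills a fixed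
proportion of them. -/
lemma volume_heavyUnion_le (hd : 1 ≤ d) (hQ₀ : IsDyadicCube Q₀) (hf : Measurable f)
    (hsmall : ¬ IsDenseAt f lam Q₀) :
    volume (heavyUnion Q₀ f lam) ≤ 2 ^ (d + 1) * volume ({x | lam < f x} ∩
      ⋃₀ {P : Set (Ed d) | IsMaxSubcube Q₀ f lam P ∧
        volume ({x | lam < f x} ∩ P) ≤ volume P / 2}) := by
  set C : Set (Set (Ed d)) := {Q | Q ∈ denseCubes Q₀ f lam ∧ lam < ⨍ z in Q, f z}
  have hC : ∀ Q ∈ C, IsMaxDyadic Q₀ (IsDenseAt f lam) Q := fun Q hQ => hQ.1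
  calc volume (⋃₀ C) = ∑' Q : C, volume (Q : Set (Ed d)) :=
        measure_sUnion (countable_of_forall_isMaxDyadic hC)
          (pairwise_disjoint_of_forall_isMaxDyadic hC) fun P hP => (hC P hP).1.measurableSet
    _ ≤ ∑' Q : C, 2 ^ (d + 1) * volume ({x | lam < f x} ∩ (Q : Set (Ed d))) := by
        refine ENNReal.tsum_le_tsum fun Q => ?_
        rw [mul_comm]
        exact (ENNReal.div_le_iff_le_mul (by simp) (by simp)).1 (hC Q Q.2).2.2.1.le
    _ = 2 ^ (d + 1) * volume ({x | lam < f x} ∩ ⋃₀ C) := by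
        rw [ENNReal.tsum_mul_left, measure_inter_sUnion_of_forall_isMaxDyadic hC
          (measurableSet_lt measurable_const hf)]
    _ ≤ _ := by
        gcongr 2 ^ (d + 1) * volume (_ ∩ ?_)
        refine sUnion_subset fun Q hQ => ?_
        obtain ⟨P, hQP, hP⟩ := exists_isMaxDyadic (p := fun Q => lam < ⨍ z in Q, f z) hd hQ₀
          hQ.1.1 hQ.1.2.1 hQ.2
        exact hQP.trans (subset_sUnion_of_mem ⟨hP,
          volume_superlevel_inter_le_half hd hQ₀ hsmall hQ.1 hP.1 hP.2.1 hQP⟩)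

end DenseCubes

section MainEstimate

variable {d : ℕ} {Q₀ : Set (Ed d)} {f : Ed d → ℝ} {lam₀ : ℝ}

lemma tendsto_lintegral_ofReal_sub_atTop {α : Type*} [MeasurableSpace α] {μ : Measure α}
    {g : α → ℝ} (hg : Measurable g) (hgi : Integrable g μ) :
    Tendsto (fun t : ℝ => ∫⁻ x, ENNReal.ofReal (g x - t) ∂μ) atTop (𝓝 0) := by
  rw [← lintegral_zero (μ := μ)]
  refine tendsto_lintegral_filter_of_dominated_convergence (fun x => ENNReal.ofReal |g x|)
    (Eventually.of_forall fun t => (hg.sub_const t).ennreal_ofReal) ?_ ?_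
    (Eventually.of_forall fun x => ?_)
  · filter_upwards [eventually_ge_atTop 0] with t ht
    exact Eventually.of_forall fun x =>
      ENNReal.ofReal_le_ofReal (by linarith [le_abs_self (g x)])
  · simpa only [← Real.enorm_eq_ofReal_abs] using hgi.hasFiniteIntegral.ne
  · refine tendsto_const_nhds.congr' ?_
    filter_upwards [eventually_ge_atTop (g x)] with t ht
    exact (ENNReal.ofReal_of_nonpos (sub_nonpos.2 ht)).symm

lemma ofReal_setIntegral_heavyUnion_le (hQ₀ : IsDyadicCube Q₀)
    (hfi : IntegrableOn f Q₀ volume) (t : ℝ) :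
    ENNReal.ofReal (∫ x in heavyUnion Q₀ f t, (f x - t)) ≤
      ∫⁻ x in Q₀, ENNReal.ofReal (f x - t) := by
  have hint : IntegrableOn (fun x => f x - t) (heavyUnion Q₀ f t) volume :=
    (hfi.sub (integrableOn_const hQ₀.volume_ne_top)).mono_set heavyUnion_subset
  calc ENNReal.ofReal (∫ x in heavyUnion Q₀ f t, (f x - t))
      ≤ ENNReal.ofReal (∫ x in heavyUnion Q₀ f t, max (f x - t) 0) :=
        ENNReal.ofReal_le_ofReal (integral_mono hint hint.pos_part fun x => le_max_left _ _)
    _ = ∫⁻ x in heavyUnion Q₀ f t, ENNReal.ofReal (f x - t) := by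
        rw [ofReal_integral_eq_lintegral_ofReal hint.pos_part
          (Eventually.of_forall fun x => le_max_right _ _)]
        simp [ENNReal.ofReal_max]
    _ ≤ _ := lintegral_mono_set heavyUnion_subset

lemma ofReal_setIntegral_le_lintegral_heavyUnion (hd : 1 ≤ d) (hQ₀ : IsDyadicCube Q₀)
    (hf : Measurable f) (hfi : IntegrableOn f Q₀ volume) :
    ENNReal.ofReal (∫ x in Q₀, (f x - lam₀)) ≤
      ∫⁻ t in Ioi lam₀, volume (heavyUnion Q₀ f t) := by
  have hsub (t : ℝ) : IntegrableOn (fun x => f x - t) Q₀ volume :=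
    hfi.sub (integrableOn_const hQ₀.volume_ne_top)
  refine le_lintegral_Ioi_of_forall_le_add (K := (volume Q₀).toNNReal)
    (F := fun t => ENNReal.ofReal (∫ x in heavyUnion Q₀ f t, (f x - t)))
    (C := ∫⁻ x in Q₀, ENNReal.ofReal (f x - lam₀)) measurable_volume_heavyUnion
    (fun t ht δ hδ => ?_) ?_ (fun t ht => ?_) ?_ (fun t ht => ?_)
  · have hV : MeasurableSet (heavyUnion Q₀ f t) := measurableSet_heavyUnion
    have hVfin : volume (heavyUnion Q₀ f t) ≠ ∞ :=
      measure_ne_top_of_subset heavyUnion_subset hQ₀.volume_ne_top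
    have hcompat : ∀ Q ∈ denseCubes Q₀ f (t + δ),
        Q ⊆ heavyUnion Q₀ f t ∨ Disjoint Q (heavyUnion Q₀ f t) := by
      intro Q hQ
      by_cases h : Disjoint Q (heavyUnion Q₀ f t)
      · exact Or.inr h
      · obtain ⟨x, hxQ, P, hP, hxP⟩ := Set.not_disjoint_iff.1 h
        obtain ⟨P', hQP', hP'⟩ := exists_isMaxDyadic hd hQ₀ hQ.1 hQ.2.1
          (hQ.2.2.1.anti (by linarith : t ≤ t + δ))
        obtain rfl := hP'.eq_of_mem hP.1 (hQP' hxQ) hxP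
        exact Or.inl (hQP'.trans (subset_sUnion_of_mem hP))
    have hle := setIntegral_le_setIntegral_heavyUnion hd hQ₀ hf hfi hV heavyUnion_subset hcompat
    have hsplit : ∫ x in heavyUnion Q₀ f t, (f x - t) =
        δ * volume.real (heavyUnion Q₀ f t) + ∫ x in heavyUnion Q₀ f t, (f x - (t + δ)) := by
      have h := integral_add (μ := volume.restrict (heavyUnion Q₀ f t))
        (integrableOn_const (C := δ) hVfin) ((hsub (t + δ)).mono_set heavyUnion_subset)
      rw [setIntegral_const, smul_eq_mul, mul_comm] at h
      rw [← h]
      congr 1 with x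
      ring
    calc ENNReal.ofReal (∫ x in heavyUnion Q₀ f t, (f x - t))
        ≤ ENNReal.ofReal (δ * volume.real (heavyUnion Q₀ f t) +
            ∫ x in heavyUnion Q₀ f (t + δ), (f x - (t + δ))) :=
          ENNReal.ofReal_le_ofReal (by rw [hsplit]; gcongr)
      _ ≤ _ := by
          refine ENNReal.ofReal_add_le.trans ?_
          rw [ENNReal.ofReal_mul hδ.le, measureReal_def, ENNReal.ofReal_toReal hVfin]
  · refine ne_top_of_le_ne_top (hsub lam₀).hasFiniteIntegral.ne (lintegral_mono fun x => ?_)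
    exact Real.ofReal_le_enorm _
  · refine (ofReal_setIntegral_heavyUnion_le hQ₀ hfi t).trans (lintegral_mono fun x => ?_)
    exact ENNReal.ofReal_le_ofReal (sub_le_sub_left ht.le _)
  · exact tendsto_of_tendsto_of_tendsto_of_le_of_le tendsto_const_nhds
      (tendsto_lintegral_ofReal_sub_atTop hf hfi) (fun _ => zero_le)
      (ofReal_setIntegral_heavyUnion_le hQ₀ hfi)
  · have hle := setIntegral_le_setIntegral_heavyUnion (lam := t) hd hQ₀ hf hfi
      hQ₀.measurableSet subset_rfl fun Q hQ => Or.inl hQ.2.1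
    have hsplit : ∫ x in Q₀, (f x - lam₀) =
        (∫ x in Q₀, (f x - t)) + (t - lam₀) * volume.real Q₀ := by
      rw [setIntegral_sub_const hfi hQ₀ subset_rfl, setIntegral_sub_const hfi hQ₀ subset_rfl]
      ring
    calc ENNReal.ofReal (∫ x in Q₀, (f x - lam₀))
        ≤ ENNReal.ofReal ((∫ x in heavyUnion Q₀ f t, (f x - t)) +
            (t - lam₀) * volume.real Q₀) :=
          ENNReal.ofReal_le_ofReal (by rw [hsplit]; gcongr)
      _ ≤ _ := by
          refine ENNReal.ofReal_add_le.trans ?_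
          rw [ENNReal.ofReal_mul (sub_nonneg.2 ht.le), measureReal_def,
            ENNReal.ofReal_toReal hQ₀.volume_ne_top, ENNReal.coe_toNNReal hQ₀.volume_ne_top]

lemma mass_in_sparse_maximal_cubes_of_measurable (hd : 1 ≤ d) (hQ₀ : IsDyadicCube Q₀)
    (hf : Measurable f) (hfi : IntegrableOn f Q₀ volume)
    (hsmall : volume ({x | lam₀ < f x} ∩ Q₀) ≤ volume Q₀ / 2 ^ (d + 1)) :
    ENNReal.ofReal ((volume Q₀).toReal * ((⨍ z in Q₀, f z) - lam₀)) ≤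
      2 ^ (d + 1) *
        ∫⁻ lam in Set.Ioi lam₀,
          volume ({x | lam < f x} ∩
            ⋃₀ {P : Set (Ed d) | IsMaxSubcube Q₀ f lam P ∧
              volume ({x | lam < f x} ∩ P) ≤ volume P / 2}) := by
  rw [← measureReal_def, ← setIntegral_sub_const hfi hQ₀ subset_rfl,
    ← lintegral_const_mul' _ _ (ENNReal.pow_ne_top ENNReal.ofNat_ne_top)]
  refine (ofReal_setIntegral_le_lintegral_heavyUnion hd hQ₀ hf hfi).trans
    (setLIntegral_mono' measurableSet_Ioi fun t ht => volume_heavyUnion_le hd hQ₀ hf fun h => ?_)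
  exact (IsDenseAt.anti (le_of_lt ht) h).not_ge hsmall

end MainEstimate

section Congruence

variable {d : ℕ} {Q₀ : Set (Ed d)} {f g : Ed d → ℝ}

lemma setAverage_eq_of_ae_eq (hfg : f =ᵐ[volume.restrict Q₀] g) {P : Set (Ed d)} (hP : P ⊆ Q₀) :
    ⨍ z in P, f z = ⨍ z in P, g z :=
  average_congr (ae_mono (Measure.restrict_mono hP le_rfl) hfg)

lemma isMaxSubcube_congr (hfg : f =ᵐ[volume.restrict Q₀] g) (lam : ℝ) (P : Set (Ed d)) :
    IsMaxSubcube Q₀ f lam P ↔ IsMaxSubcube Q₀ g lam P := by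
  refine and_congr_right fun _ => and_congr_right fun hP => and_congr ?_ ?_
  · rw [setAverage_eq_of_ae_eq hfg hP]
  · refine forall_congr' fun P' => forall_congr' fun _ => forall_congr' fun hP' => ?_
    rw [setAverage_eq_of_ae_eq hfg hP']

lemma volume_superlevel_inter_congr (hQ₀ : MeasurableSet Q₀)
    (hfg : f =ᵐ[volume.restrict Q₀] g) (lam : ℝ) {E : Set (Ed d)} (hE : E ⊆ Q₀) :
    volume ({x | lam < f x} ∩ E) = volume ({x | lam < g x} ∩ E) := by
  refine measure_congr ?_
  filter_upwards [(ae_restrict_iff' hQ₀).1 hfg] with x hx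
  refine propext (and_congr_left fun hxE => ?_)
  change lam < f x ↔ lam < g x
  rw [hx (hE hxE)]

end Congruence

/-- If `|{f > λ₀} ∩ Q₀| ≤ 2^{-d-1}|Q₀|` then
`|Q₀| (f_{Q₀} − λ₀) ≤ 2^{d+1} ∫_{λ₀}^∞ |{f > λ} ∩ ⋃{P ∈ 𝒬_λ : |{f > λ} ∩ P| ≤ |P|/2}| dλ`,
where `𝒬_λ` is the family of maximal dyadic subcubes `P ⊆ Q₀` with `⨍_P f > λ`. -/
theorem mass_in_sparse_maximal_cubes {d : ℕ} (hd : 1 ≤ d)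
    (Q₀ : Set (Ed d)) (hQ₀ : IsDyadicCube Q₀) (lam₀ : ℝ) (f : Ed d → ℝ)
    (hf : IntegrableOn f Q₀ volume)
    (hsmall : volume ({x | lam₀ < f x} ∩ Q₀) ≤ volume Q₀ / 2 ^ (d + 1)) :
    ENNReal.ofReal ((volume Q₀).toReal * ((⨍ z in Q₀, f z) - lam₀)) ≤
      2 ^ (d + 1) *
        ∫⁻ lam in Set.Ioi lam₀,
          volume ({x | lam < f x} ∩
            ⋃₀ {P : Set (Ed d) | IsMaxSubcube Q₀ f lam P ∧
              volume ({x | lam < f x} ∩ P) ≤ volume P / 2}) := by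
  obtain ⟨g, hgm, hfg⟩ := hf.aestronglyMeasurable
  have hset (lam : ℝ) : {P : Set (Ed d) | IsMaxSubcube Q₀ f lam P ∧
      volume ({x | lam < f x} ∩ P) ≤ volume P / 2} =
      {P : Set (Ed d) | IsMaxSubcube Q₀ g lam P ∧
        volume ({x | lam < g x} ∩ P) ≤ volume P / 2} := by
    ext P
    simp only [mem_ofPred_eq, isMaxSubcube_congr hfg lam P]
    refine and_congr_right fun hP => ?_
    rw [volume_superlevel_inter_congr hQ₀.measurableSet hfg lam hP.2.1]
  have hsub (lam : ℝ) : ⋃₀ {P : Set (Ed d) | IsMaxSubcube Q₀ g lam P ∧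
      volume ({x | lam < g x} ∩ P) ≤ volume P / 2} ⊆ Q₀ :=
    sUnion_subset fun P hP => hP.1.2.1
  simp only [hset, volume_superlevel_inter_congr hQ₀.measurableSet hfg _ (hsub _),
    setAverage_eq_of_ae_eq hfg subset_rfl]
  rw [volume_superlevel_inter_congr hQ₀.measurableSet hfg _ subset_rfl] at hsmall
  exact mass_in_sparse_maximal_cubes_of_measurable hd hQ₀ hgm.measurable (hf.congr hfg) hsmall

end
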